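/- Let M and E be symmetric n×n real matrices, M̂ = M + E, with orthonormal eigenbasis (u_k)_{k=1}^n of M having eigenvalues λ_k, and let û_j be a unit eigenvector of M̂ with eigenvalue λ̂_j. Suppose λ_j is a simple eigenvalue (λ_k ≠ λ_j for all k ≠ j). Then for any vector a ∈ ℝ^n: a^T û_j − (a^T u_j)(u_j^T û_j) − Σ_{k≠j} (u_j^T E u_k)/(λ_j − λ_k) · (a^T u_k) = Σ_{k≠j} ((û_j − u_j)^T E u_k)/(λ_j − λ_k) · (a^T u_k) + Σ_{k≠j} (λ_j − λ̂_j)/(λ_j − λ_k) · (û_j^T u_k)(u_k^T a). -/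

import Mathlib

open Matrix

/-- Parseval's identity for an orthonormal family of `n` vectors in `ℝⁿ`. -/
theorem dotProduct_eq_sum_of_orthonormal {n : ℕ} {u : Fin n → Fin n → ℝ}
    (horth : ∀ k l, u k ⬝ᵥ u l = if k = l then 1 else 0) (a b : Fin n → ℝ) :
    a ⬝ᵥ b = ∑ k, (a ⬝ᵥ u k) * (u k ⬝ᵥ b) := by
  have h : Matrix.of u * (Matrix.of u)ᵀ = 1 := by
    ext k l
    rw [Matrix.one_apply, ← horth k l]
    rfl
  have h' : (Matrix.of u)ᵀ * Matrix.of u = 1 := mul_eq_one_comm.mp h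
  calc a ⬝ᵥ b = a ⬝ᵥ ((Matrix.of u)ᵀ * Matrix.of u) *ᵥ b := by rw [h', one_mulVec]
    _ = (a ᵥ* (Matrix.of u)ᵀ) ⬝ᵥ (Matrix.of u *ᵥ b) := by
      rw [← mulVec_mulVec, dotProduct_mulVec]
    _ = ∑ k, (a ⬝ᵥ u k) * (u k ⬝ᵥ b) := rfl

/-- Testing a perturbation between an eigenvector of `M` and one of `M + E` gives the
difference of the eigenvalues times the overlap. -/
theorem dotProduct_mulVec_perturbation {n : Type*} [Fintype n] {M E : Matrix n n ℝ}
    (hM : M.IsSymm) (hE : E.IsSymm) {v w : n → ℝ} {μ ν : ℝ}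
    (hv : M *ᵥ v = μ • v) (hw : (M + E) *ᵥ w = ν • w) :
    w ⬝ᵥ E *ᵥ v = (ν - μ) * (w ⬝ᵥ v) := by
  have h : w ⬝ᵥ (M + E) *ᵥ v = ν * (w ⬝ᵥ v) := by
    rw [dotProduct_mulVec, ← mulVec_transpose, (hM.add hE).eq, hw, smul_dotProduct, smul_eq_mul]
  rw [add_mulVec, dotProduct_add, hv, dotProduct_smul, smul_eq_mul] at h
  linarith

/-- First-order deterministic expansion for linear forms of eigenvectors. -/
theorem stmt_1 {n : ℕ} (M E : Matrix (Fin n) (Fin n) ℝ)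
    (hM : M.IsSymm) (hE : E.IsSymm)
    (u : Fin n → Fin n → ℝ) (lam : Fin n → ℝ)
    (horth : ∀ k l, u k ⬝ᵥ u l = if k = l then 1 else 0)
    (hu : ∀ k, M.mulVec (u k) = lam k • u k)
    (j : Fin n) (hsimple : ∀ k, k ≠ j → lam k ≠ lam j)
    (uhat : Fin n → ℝ) (lamhat : ℝ)
    (hunit : uhat ⬝ᵥ uhat = 1)
    (huhat : (M + E).mulVec uhat = lamhat • uhat)
    (a : Fin n → ℝ) :
    a ⬝ᵥ uhat - (a ⬝ᵥ u j) * (u j ⬝ᵥ uhat)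
        - ∑ k ∈ Finset.univ.erase j, (u j ⬝ᵥ E.mulVec (u k)) / (lam j - lam k) * (a ⬝ᵥ u k)
      = ∑ k ∈ Finset.univ.erase j, ((uhat - u j) ⬝ᵥ E.mulVec (u k)) / (lam j - lam k) * (a ⬝ᵥ u k)
        + ∑ k ∈ Finset.univ.erase j,
            (lam j - lamhat) / (lam j - lam k) * ((uhat ⬝ᵥ u k) * (u k ⬝ᵥ a)) := by
  rw [dotProduct_eq_sum_of_orthonormal horth a uhat,
    ← Finset.add_sum_erase _ _ (Finset.mem_univ j), add_sub_cancel_left,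
    ← Finset.sum_sub_distrib, ← Finset.sum_add_distrib]
  refine Finset.sum_congr rfl fun k hk => ?_
  have hne : lam j - lam k ≠ 0 := sub_ne_zero.mpr (hsimple k (Finset.ne_of_mem_erase hk)).symm
  rw [sub_dotProduct, dotProduct_mulVec_perturbation hM hE (hu k) huhat,
    dotProduct_comm (u k) uhat, dotProduct_comm (u k) a]
  field_simp
  ring
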